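/- Let p be a prime and n ≥ 1. For every y ∈ ℚ_p^n one has w_p(y) = (n(1 + γ(y)) + γ(y)) / (1 − (n+1)γ(y)), with the convention that the right-hand side equals +∞ when γ(y) ≥ 1/(n+1) and that the equality is an equality of elements of [0, +∞]. -/

import Mathlib

open MeasureTheory Metric
open scoped ENNReal NNReal

namespace PadicDioph

variable (p : ℕ) [Fact p.Prime]

noncomputable instance : MeasurableSpace ℚ_[p] := borel _
instance : BorelSpace ℚ_[p] := ⟨rfl⟩

/-- Membership in `ℤ[1/p]`, viewed inside `ℚ`. -/
def IsZInvP (q : ℚ) : Prop := ∃ (z : ℤ) (k : ℕ), q = (z : ℚ) / (p : ℚ) ^ k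

/-- Sup norm (max of archimedean absolute values) of a finite tuple of rationals. -/
noncomputable def supNormR {m : ℕ} (q : Fin m → ℚ) : ℝ := ⨆ i, |(q i : ℝ)|

/-- Sup of the `p`-adic absolute values of a finite tuple of rationals. -/
noncomputable def supNormP {m : ℕ} (q : Fin m → ℚ) : ℝ := ⨆ i, ‖((q i : ℚ_[p]))‖

/-- Sup norm of an integer tuple together with an extra integer coordinate. -/
noncomputable def supNormZ {n : ℕ} (q0 : ℤ) (q : Fin n → ℤ) : ℝ :=
  max |(q0 : ℝ)| (⨆ i, |((q i : ℤ) : ℝ)|)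

/-- The classical Diophantine exponent `w(y)` of `y ∈ ℚ_p^n`: the supremum of all `v > 0`
such that `|q₀ + q·y|_p ≤ ‖(q₀,q)‖_∞^{-v}` has infinitely many integer solutions. -/
noncomputable def wExp {n : ℕ} (y : Fin n → ℚ_[p]) : ℝ≥0∞ :=
  ⨆ (v : ℝ) (_ : 0 < v ∧
    {qq : ℤ × (Fin n → ℤ) |
      ‖((qq.1 : ℚ_[p]) + ∑ i, (qq.2 i : ℚ_[p]) * y i)‖ ≤
        (supNormZ qq.1 qq.2) ^ (-v)}.Infinite), ENNReal.ofReal v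

/-- `y` is very well approximable if `w(y) > n + 1`. -/
def IsVWA {n : ℕ} (y : Fin n → ℚ_[p]) : Prop :=
  ENNReal.ofReal ((n : ℝ) + 1) < wExp p y

/-- The defining condition of the exponent `w_p`: there are solutions
`q̃ = (q₀, q) ∈ ℤ[1/p]^{n+1}` of `|q·y + q₀|_p < (‖q‖_p ‖q̃‖_∞)^{-v} ‖q̃‖_∞^{-1}`
with `‖q‖_p ‖q̃‖_∞` arbitrarily large. -/
def WpCond {n : ℕ} (y : Fin n → ℚ_[p]) (v : ℝ) : Prop :=
  ∀ T : ℝ, ∃ (q0 : ℚ) (q : Fin n → ℚ),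
    IsZInvP p q0 ∧ (∀ i, IsZInvP p (q i)) ∧
    T < supNormP p q * supNormR (Fin.cons q0 q) ∧
    ‖(∑ i, (q i : ℚ_[p]) * y i) + (q0 : ℚ_[p])‖ <
      (supNormP p q * supNormR (Fin.cons q0 q)) ^ (-v) * (supNormR (Fin.cons q0 q))⁻¹

/-- The exponent `w_p(y)`. -/
noncomputable def wpExp {n : ℕ} (y : Fin n → ℚ_[p]) : ℝ≥0∞ :=
  ⨆ (v : ℝ) (_ : 0 < v ∧ WpCond p y v), ENNReal.ofReal v

/-- `Π_+` of a tuple of rationals: the product of `|q_i|_∞` over the nonzero coordinates. -/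
noncomputable def piPlusQ {m : ℕ} (q : Fin m → ℚ) : ℝ :=
  ∏ i, (if q i = 0 then 1 else |(q i : ℝ)|)

/-- `Π_+` of `(q₀, q)` with integer coordinates. -/
noncomputable def piPlusZ {n : ℕ} (q0 : ℤ) (q : Fin n → ℤ) : ℝ :=
  (if q0 = 0 then 1 else |(q0 : ℝ)|) * ∏ i, (if q i = 0 then 1 else |((q i : ℤ) : ℝ)|)

/-- `y ∈ ℚ_p^n` is very well multiplicatively approximable. -/
def IsVWMA {n : ℕ} (y : Fin n → ℚ_[p]) : Prop :=
  ∃ ε : ℝ, 0 < ε ∧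
    {qq : ℤ × (Fin n → ℤ) |
      ‖((qq.1 : ℚ_[p]) + ∑ i, (qq.2 i : ℚ_[p]) * y i)‖ ≤
        (piPlusZ qq.1 qq.2) ^ (-(1 + ε))}.Infinite

/-- A measure on `ℚ_p^n` is strongly extremal if almost every point is not VWMA. -/
def StronglyExtremal {n : ℕ} (μ : Measure (Fin n → ℚ_[p])) : Prop :=
  ∀ᵐ y ∂μ, ¬ IsVWMA p y

/-- `δ(g_t u_y D^{n+1})` for the one-parameter flow: `g_t` has `p`-adic component
`diag(p^{-t},1,…,1)` and archimedean component `p^{-t/(n+1)}·Id`. -/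
noncomputable def deltaOne {n : ℕ} (y : Fin n → ℚ_[p]) (t : ℕ) : ℝ :=
  sInf { c : ℝ | ∃ qt : Fin (n + 1) → ℚ, (∀ i, IsZInvP p (qt i)) ∧ qt ≠ 0 ∧
    c = ((p : ℝ) ^ (-(t : ℝ) / ((n : ℝ) + 1)) * supNormR qt) *
        max (‖(((p : ℚ_[p]) ^ t)⁻¹ * ((qt 0 : ℚ_[p]) + ∑ i : Fin n, (qt i.succ : ℚ_[p]) * y i))‖)
            (⨆ i : Fin n, ‖((qt i.succ : ℚ_[p]))‖) }

/-- The exponent `γ(y)`. -/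
noncomputable def gammaExp {n : ℕ} (y : Fin n → ℚ_[p]) : ℝ :=
  sSup {c : ℝ | 0 ≤ c ∧ ∀ N : ℕ, ∃ t : ℕ, N ≤ t ∧
    deltaOne p y t ≤ (p : ℝ) ^ (-(c * (t : ℝ)))}

/-- `δ(g_t u_y D^{n+1})` for the multiparameter flow: for `t = (t₀,…,t_n)` with
`T = Σ tᵢ`, the `p`-adic component of `g_t` is `diag(p^{-T},1,…,1)` and the archimedean
component is `diag(p^{-t₀},…,p^{-t_n})`. -/
noncomputable def deltaMulti {n : ℕ} (y : Fin n → ℚ_[p]) (t : Fin (n + 1) → ℕ) : ℝ :=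
  sInf { c : ℝ | ∃ qt : Fin (n + 1) → ℚ, (∀ i, IsZInvP p (qt i)) ∧ qt ≠ 0 ∧
    c = (⨆ i, (p : ℝ) ^ (-((t i : ℝ))) * |(qt i : ℝ)|) *
        max (‖(((p : ℚ_[p]) ^ (∑ i, t i))⁻¹ *
              ((qt 0 : ℚ_[p]) + ∑ i : Fin n, (qt i.succ : ℚ_[p]) * y i))‖)
            (⨆ i : Fin n, ‖((qt i.succ : ℚ_[p]))‖) }

/-- The support of a measure on a metric space. -/
def measSupp {X : Type*} [MetricSpace X] [MeasurableSpace X] (μ : Measure X) : Set X :=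
  {x | ∀ r : ℝ, 0 < r → 0 < μ (ball x r)}

/-- `‖f‖_{μ,B}`. -/
noncomputable def muSupNorm {X : Type*} [MetricSpace X] [MeasurableSpace X]
    (μ : Measure X) (B : Set X) (f : X → ℚ_[p]) : ℝ :=
  sSup {c : ℝ | 0 < μ {x ∈ B | c < ‖f x‖}}

/-- `f` is `(C, α)`-good on `V` with respect to `μ`. -/
def IsGoodOn {X : Type*} [MetricSpace X] [MeasurableSpace X] (μ : Measure X)
    (C a : ℝ) (V : Set X) (f : X → ℚ_[p]) : Prop :=
  ∀ (x₀ : X) (r : ℝ), 0 < r → x₀ ∈ measSupp μ → ball x₀ r ⊆ V →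
    ∀ ε : ℝ, 0 < ε →
      μ {x ∈ ball x₀ r | ‖f x‖ < ε} ≤
        ENNReal.ofReal (C * (ε / muSupNorm p μ (ball x₀ r) f) ^ a) * μ (ball x₀ r)

/-- A metric space is Besicovitch: any family of balls whose centers exhaust a bounded
set `A` admits a countable subfamily covering `A` with multiplicity at most `N`. -/
def IsBesicovitch (X : Type*) [MetricSpace X] : Prop :=
  ∃ N : ℕ, ∀ (A : Set X), Bornology.IsBounded A →
    ∀ F : Set (X × ℝ), (∀ b ∈ F, 0 < b.2) → (∀ x ∈ A, ∃ r : ℝ, (x, r) ∈ F) →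
      ∃ S ⊆ F, S.Countable ∧ (∀ x ∈ A, ∃ b ∈ S, x ∈ ball b.1 b.2) ∧
        ∀ x : X, {b ∈ S | x ∈ ball b.1 b.2}.encard ≤ N

/-- `μ` is `D`-Federer on the open set `U`. -/
def IsDFedererOn {X : Type*} [MetricSpace X] [MeasurableSpace X]
    (μ : Measure X) (D : ℝ) (U : Set X) : Prop :=
  ∀ x ∈ measSupp μ, ∀ r : ℝ, 0 < r → ball x (3 * r) ⊆ U →
    μ (ball x (3 * r)) ≤ ENNReal.ofReal D * μ (ball x r)

/-- `μ` is Federer. -/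
def IsFederer {X : Type*} [MetricSpace X] [MeasurableSpace X] (μ : Measure X) : Prop :=
  ∀ᵐ x ∂μ, ∃ U : Set X, IsOpen U ∧ x ∈ U ∧ 0 < μ U ∧ ∃ D : ℝ, 0 < D ∧ IsDFedererOn μ D U

/-- The pair `(f, μ)` is good: `μ`-a.e. point has a neighbourhood `V` and `C, α > 0`
such that every affine combination `c₀ + Σ cᵢ fᵢ` is `(C, α)`-good on `V` w.r.t. `μ`. -/
def GoodPair {X : Type*} [MetricSpace X] [MeasurableSpace X] {n : ℕ}
    (f : X → (Fin n → ℚ_[p])) (μ : Measure X) : Prop :=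
  ∀ᵐ x ∂μ, ∃ V : Set X, IsOpen V ∧ x ∈ V ∧ ∃ C a : ℝ, 0 < C ∧ 0 < a ∧
    ∀ c0 : ℚ_[p], ∀ c : Fin n → ℚ_[p],
      IsGoodOn p μ C a V (fun x => c0 + ∑ i, c i * f x i)

/-- `(f, μ)` is nonplanar in the affine subspace `L`. -/
def NonplanarIn {X : Type*} [MetricSpace X] [MeasurableSpace X] {n : ℕ}
    (f : X → (Fin n → ℚ_[p])) (μ : Measure X)
    (L : AffineSubspace ℚ_[p] (Fin n → ℚ_[p])) : Prop :=
  ∀ B : Set X, IsOpen B → B.Nonempty → 0 < μ B →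
    affineSpan ℚ_[p] (f '' (B ∩ measSupp μ)) = L

/-- `f` is nondegenerate in the affine subspace `L` at `x`: `f` takes values in `L` and the
span of the partial derivatives of `f` at `x` up to some order is the linear part of `L`. -/
def NondegenerateAt {d n : ℕ} (f : (Fin d → ℚ_[p]) → (Fin n → ℚ_[p]))
    (L : AffineSubspace ℚ_[p] (Fin n → ℚ_[p])) (x : Fin d → ℚ_[p]) : Prop :=
  (∀ u, f u ∈ L) ∧ ∃ m : ℕ,
    Submodule.span ℚ_[p]
      {v : Fin n → ℚ_[p] | ∃ j : ℕ, j ≤ m ∧ 1 ≤ j ∧ ∃ vs : Fin j → (Fin d → ℚ_[p]),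
        v = iteratedFDeriv ℚ_[p] j f x vs} = L.direction

/-- An analytic chart of the `d`-dimensional submanifold `M` of `ℚ_p^n`: an analytic map
`f` on an open set `U`, injective on `U`, immersive, a homeomorphism onto its image, whose
image is a relatively open subset of `M`. -/
def IsChart (d n : ℕ) (M : Set (Fin n → ℚ_[p]))
    (U : Set (Fin d → ℚ_[p])) (f : (Fin d → ℚ_[p]) → (Fin n → ℚ_[p])) : Prop :=
  IsOpen U ∧ AnalyticOnNhd ℚ_[p] f U ∧ Set.InjOn f U ∧
  (∀ x ∈ U, Function.Injective (fderiv ℚ_[p] f x)) ∧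
  (∀ x ∈ U, ∀ V : Set (Fin d → ℚ_[p]), IsOpen V → x ∈ V →
      ∃ W : Set (Fin n → ℚ_[p]), IsOpen W ∧ f x ∈ W ∧ W ∩ f '' U ⊆ f '' (V ∩ U)) ∧
  ∃ W : Set (Fin n → ℚ_[p]), IsOpen W ∧ M ∩ W = f '' U

/-- `M` is a `d`-dimensional analytic submanifold of `ℚ_p^n`. -/
def IsAnalyticSubmanifold (d n : ℕ) (M : Set (Fin n → ℚ_[p])) : Prop :=
  M.Nonempty ∧ ∀ y ∈ M, ∃ (U : Set (Fin d → ℚ_[p])) (f : (Fin d → ℚ_[p]) → (Fin n → ℚ_[p])),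
    IsChart p d n M U f ∧ y ∈ f '' U


/-!
Attach to a nonzero `q̃ = (q₀, q)` over `ℤ[1/p]` its height `X = ‖q‖_p ‖q̃‖_∞` and its defect
`Z = |q₀ + q·y|_p ‖q̃‖_∞`, both invariant under multiplication of `q̃` by powers of `p`. That `y` is
approximable with exponent `v` means that `Z < X ^ (-v)` for vectors of arbitrarily large height,
while `g_t u_y q̃` has content `p ^ (-t / (n + 1)) * max (p ^ t * Z) X`. For `p ^ t ≈ X ^ (v + 1)`
the two terms of the maximum balance, so exponent `v` corresponds to decay of `δ(g_t u_y D^{n+1})`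
like `p ^ (-c t)` with `c = 1 / (n + 1) - 1 / (v + 1)`; solving for `v` gives the formula.

Passing from the flow back to approximation, one has to see that the heights are unbounded. Up to
powers of `p` there are finitely many vectors of bounded height and defect, so a defect tending to
`0` forces this, unless `q₀ + q·y` vanishes for some `q̃`; then every `v` is admissible, as the
multiples of `q̃` by integers prime to `p` show. Dirichlet's theorem, in the form
`δ(g_t u_y D^{n+1}) ≤ 1`, makes the supremum defining `γ(y)` one over a nonempty set.
-/

section

variable {p} {m n : ℕ}

theorem one_lt_natCast_prime (p : ℕ) [hp : Fact p.Prime] : (1 : ℝ) < p := by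
  exact_mod_cast hp.out.one_lt

/-! ### Sup norms -/

theorem abs_le_supNormR (q : Fin m → ℚ) (i : Fin m) : |(q i : ℝ)| ≤ supNormR q :=
  le_ciSup (f := fun i => |(q i : ℝ)|) (Set.finite_range _).bddAbove i

theorem supNormR_le {q : Fin m → ℚ} {r : ℝ} (hr : 0 ≤ r) (h : ∀ i, |(q i : ℝ)| ≤ r) :
    supNormR q ≤ r :=
  Real.iSup_le h hr

theorem supNormR_nonneg (q : Fin m → ℚ) : 0 ≤ supNormR q :=
  Real.iSup_nonneg fun _ => abs_nonneg _

theorem supNormR_pos {q : Fin m → ℚ} (hq : q ≠ 0) : 0 < supNormR q := by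
  obtain ⟨i, hi⟩ := Function.ne_iff.1 hq
  exact (abs_pos.2 (Rat.cast_ne_zero.2 hi)).trans_le (abs_le_supNormR q i)

theorem supNormR_smul (r : ℚ) (q : Fin m → ℚ) : supNormR (r • q) = |(r : ℝ)| * supNormR q := by
  simp only [supNormR, Real.mul_iSup_of_nonneg (abs_nonneg _), Pi.smul_apply, smul_eq_mul,
    Rat.cast_mul, abs_mul]

theorem supNormR_tail_le (q : Fin (n + 1) → ℚ) : supNormR (Fin.tail q) ≤ supNormR q :=
  supNormR_le (supNormR_nonneg q) fun i => abs_le_supNormR q i.succ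

theorem finite_setOf_supNormR_intCast_le (r : ℝ) :
    {a : Fin m → ℤ | supNormR (fun i => (a i : ℚ)) ≤ r}.Finite := by
  refine (Set.finite_Icc (fun _ => -⌊r⌋) fun _ => ⌊r⌋).subset fun a ha => ?_
  have abs_le_floor (i : Fin m) : |a i| ≤ ⌊r⌋ := by
    have := (abs_le_supNormR (fun i => (a i : ℚ)) i).trans ha
    exact Int.le_floor.2 (by simpa using this)
  exact ⟨fun i => (abs_le.1 (abs_le_floor i)).1, fun i => (abs_le.1 (abs_le_floor i)).2⟩

theorem norm_le_supNormP (q : Fin m → ℚ) (i : Fin m) : ‖(q i : ℚ_[p])‖ ≤ supNormP p q :=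
  le_ciSup (f := fun i => ‖(q i : ℚ_[p])‖) (Set.finite_range _).bddAbove i

theorem supNormP_le {q : Fin m → ℚ} {r : ℝ} (hr : 0 ≤ r) (h : ∀ i, ‖(q i : ℚ_[p])‖ ≤ r) :
    supNormP p q ≤ r :=
  Real.iSup_le h hr

theorem supNormP_nonneg (q : Fin m → ℚ) : 0 ≤ supNormP p q :=
  Real.iSup_nonneg fun _ => norm_nonneg _

theorem supNormP_smul (r : ℚ) (q : Fin m → ℚ) :
    supNormP p (r • q) = ‖(r : ℚ_[p])‖ * supNormP p q := by
  simp only [supNormP, Real.mul_iSup_of_nonneg (norm_nonneg _), Pi.smul_apply, smul_eq_mul,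
    Rat.cast_mul, norm_mul]

/-! ### The ring `ℤ[1/p]` -/

theorem isZInvP_intCast {p : ℕ} (z : ℤ) : IsZInvP p z :=
  ⟨z, 0, by simp⟩

theorem isZInvP_zpow {p : ℕ} (k : ℤ) : IsZInvP p ((p : ℚ) ^ k) := by
  obtain ⟨a, rfl | rfl⟩ := k.eq_nat_or_neg
  · exact ⟨p ^ a, 0, by simp⟩
  · exact ⟨1, a, by simp⟩

theorem IsZInvP.mul {p : ℕ} {r s : ℚ} (hr : IsZInvP p r) (hs : IsZInvP p s) :
    IsZInvP p (r * s) := by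
  obtain ⟨a, k, rfl⟩ := hr
  obtain ⟨b, l, rfl⟩ := hs
  exact ⟨a * b, k + l, by rw [div_mul_div_comm, pow_add, Int.cast_mul]⟩

theorem abs_zpow_mul_norm_zpow (k : ℤ) :
    |(((p : ℚ) ^ k : ℚ) : ℝ)| * ‖(((p : ℚ) ^ k : ℚ) : ℚ_[p])‖ = 1 := by
  have hp : (0 : ℝ) < p := one_pos.trans (one_lt_natCast_prime p)
  rw [Rat.cast_zpow, Rat.cast_zpow, Rat.cast_natCast, Rat.cast_natCast, Padic.norm_p_zpow,
    abs_of_pos (zpow_pos hp k), ← zpow_add₀ hp.ne', add_neg_cancel, zpow_zero]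

theorem one_le_abs_mul_norm_intCast {z : ℤ} (hz : z ≠ 0) : 1 ≤ |(z : ℝ)| * ‖(z : ℚ_[p])‖ := by
  have hp : (0 : ℝ) < p := one_pos.trans (one_lt_natCast_prime p)
  have norm_eq : ‖(z : ℚ_[p])‖ = ((p : ℝ) ^ padicValInt p z)⁻¹ := by
    rw [Padic.norm_eq_zpow_neg_valuation (Int.cast_ne_zero.2 hz), Padic.valuation_intCast,
      zpow_neg, zpow_natCast]
  have pow_le : (p : ℝ) ^ padicValInt p z ≤ |(z : ℝ)| := by
    exact_mod_cast Int.le_of_dvd (abs_pos.2 hz) ((dvd_abs _ _).2 (padicValInt_dvd z))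
  rwa [norm_eq, ← div_eq_mul_inv, one_le_div (pow_pos hp _)]

theorem IsZInvP.one_le_abs_mul_norm {r : ℚ} (hr : IsZInvP p r) (h0 : r ≠ 0) :
    1 ≤ |(r : ℝ)| * ‖(r : ℚ_[p])‖ := by
  obtain ⟨z, k, rfl⟩ := hr
  have hz : z ≠ 0 := by
    rintro rfl
    simp at h0
  have mul_zpow_neg : (z : ℚ) / (p : ℚ) ^ k = z * (p : ℚ) ^ (-k : ℤ) := by
    rw [zpow_neg, zpow_natCast, div_eq_mul_inv]
  rw [mul_zpow_neg, Rat.cast_mul, Rat.cast_mul, abs_mul, norm_mul, mul_mul_mul_comm,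
    abs_zpow_mul_norm_zpow, mul_one, Rat.cast_intCast, Rat.cast_intCast]
  exact one_le_abs_mul_norm_intCast hz

theorem IsZInvP.exists_eq_intCast {r : ℚ} (hr : IsZInvP p r) (h : ‖(r : ℚ_[p])‖ ≤ 1) :
    ∃ z : ℤ, r = z := by
  obtain ⟨z, k, rfl⟩ := hr
  have hp : (p : ℚ) ≠ 0 := Nat.cast_ne_zero.2 (Fact.out : p.Prime).ne_zero
  have hp' : (0 : ℝ) < p := one_pos.trans (one_lt_natCast_prime p)
  have pow_dvd : (p : ℤ) ^ k ∣ z := by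
    rwa [Rat.cast_div, Rat.cast_pow, Rat.cast_natCast, Rat.cast_intCast, norm_div,
      Padic.norm_p_pow, div_le_one (zpow_pos hp' _), Padic.norm_int_le_pow_iff_dvd] at h
  obtain ⟨w, rfl⟩ := pow_dvd
  exact ⟨w, by rw [Int.cast_mul, Int.cast_pow, Int.cast_natCast, mul_div_cancel_left₀ _
    (pow_ne_zero k hp)]⟩

/-- The nonzero vectors of `D^m`, where `D = ℤ[1/p]`. -/
def nonzeroLattice (p m : ℕ) : Set (Fin m → ℚ) :=
  {q | (∀ i, IsZInvP p (q i)) ∧ q ≠ 0}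

theorem smul_mem_nonzeroLattice {p m : ℕ} {r : ℚ} {q : Fin m → ℚ} (hr : IsZInvP p r) (h0 : r ≠ 0)
    (hq : q ∈ nonzeroLattice p m) : r • q ∈ nonzeroLattice p m :=
  ⟨fun i => hr.mul (hq.1 i), smul_ne_zero h0 hq.2⟩

theorem nonzeroLattice_nonempty {p n : ℕ} : (nonzeroLattice p (n + 1)).Nonempty :=
  ⟨fun _ => ((1 : ℤ) : ℚ), fun _ => isZInvP_intCast 1, fun h => by simpa using congrFun h 0⟩

theorem one_le_supNormP_mul_supNormR {q : Fin m → ℚ} (hq : q ∈ nonzeroLattice p m) :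
    1 ≤ supNormP p q * supNormR q := by
  obtain ⟨i, hi⟩ := Function.ne_iff.1 hq.2
  calc 1 ≤ |(q i : ℝ)| * ‖(q i : ℚ_[p])‖ := (hq.1 i).one_le_abs_mul_norm hi
    _ = ‖(q i : ℚ_[p])‖ * |(q i : ℝ)| := mul_comm _ _
    _ ≤ supNormP p q * supNormR q :=
      mul_le_mul (norm_le_supNormP q i) (abs_le_supNormR q i) (abs_nonneg _) (supNormP_nonneg q)

theorem exists_zpow_smul_eq_intCast {q : Fin m → ℚ} (hq : q ∈ nonzeroLattice p m) :
    ∃ (k : ℤ) (a : Fin m → ℤ), ((p : ℚ) ^ k • q = fun i => (a i : ℚ)) ∧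
      supNormP p (fun i => (a i : ℚ)) = 1 := by
  have hp : (p : ℝ) ≠ 0 := (one_pos.trans (one_lt_natCast_prime p)).ne'
  obtain ⟨i, hi⟩ := Function.ne_iff.1 hq.2
  have : Nonempty (Fin m) := ⟨i⟩
  obtain ⟨j, hj⟩ : ∃ j, ‖(q j : ℚ_[p])‖ = supNormP p q :=
    exists_eq_ciSup_of_finite (f := fun i => ‖(q i : ℚ_[p])‖)
  have hqj : (q j : ℚ_[p]) ≠ 0 := by
    rw [← norm_pos_iff, hj]
    exact (norm_pos_iff.2 (Rat.cast_ne_zero.2 hi)).trans_le (norm_le_supNormP q i)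
  let k : ℤ := -(q j : ℚ_[p]).valuation
  have supNormP_eq_one : supNormP p ((p : ℚ) ^ k • q) = 1 := by
    rw [supNormP_smul, ← hj, Padic.norm_eq_zpow_neg_valuation hqj, Rat.cast_zpow,
      Rat.cast_natCast, Padic.norm_p_zpow, ← zpow_add₀ hp, neg_add_cancel, zpow_zero]
  choose a ha using fun i => ((isZInvP_zpow k).mul (hq.1 i)).exists_eq_intCast
    ((norm_le_supNormP ((p : ℚ) ^ k • q) i).trans supNormP_eq_one.le)
  have smul_eq : (p : ℚ) ^ k • q = fun i => (a i : ℚ) := funext ha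
  exact ⟨k, a, smul_eq, smul_eq ▸ supNormP_eq_one⟩

theorem exists_natCast_gt_norm_eq_one (p : ℕ) [Fact p.Prime] (T : ℝ) :
    ∃ l : ℕ, T < l ∧ ‖(l : ℚ_[p])‖ = 1 := by
  obtain ⟨k, hk⟩ := exists_nat_gt T
  refine ⟨p * k + 1, hk.trans_le ?_, Padic.norm_natCast_eq_one_iff.2 (by simp)⟩
  exact_mod_cast (Nat.le_mul_of_pos_left k (Fact.out : p.Prime).pos).trans (Nat.le_succ _)

/-! ### Height and defect -/

/-- The inhomogeneous linear form `q₀ + q·y` in the vector `(q₀, q)`. -/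
noncomputable def affineForm (y : Fin n → ℚ_[p]) (q : Fin (n + 1) → ℚ) : ℚ_[p] :=
  (q 0 : ℚ_[p]) + ∑ i : Fin n, (q i.succ : ℚ_[p]) * y i

variable (p) in
/-- The size `‖q‖_p ‖q̃‖_∞` of `q̃ = (q₀, q)` in which approximation to `y` is measured. -/
noncomputable def height (q : Fin (n + 1) → ℚ) : ℝ :=
  supNormP p (Fin.tail q) * supNormR q

/-- The quality `|q₀ + q·y|_p ‖q̃‖_∞` of the approximation to `y` given by `q̃ = (q₀, q)`. Like the
height, it is invariant under multiplication of `q̃` by powers of `p`. -/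
noncomputable def defect (y : Fin n → ℚ_[p]) (q : Fin (n + 1) → ℚ) : ℝ :=
  ‖affineForm y q‖ * supNormR q

theorem norm_affineForm_smul (y : Fin n → ℚ_[p]) (r : ℚ) (q : Fin (n + 1) → ℚ) :
    ‖affineForm y (r • q)‖ = ‖(r : ℚ_[p])‖ * ‖affineForm y q‖ := by
  simp only [affineForm, ← norm_mul, mul_add, Finset.mul_sum, Pi.smul_apply, smul_eq_mul,
    Rat.cast_mul, mul_assoc]

theorem height_smul (r : ℚ) (q : Fin (n + 1) → ℚ) :
    height p (r • q) = |(r : ℝ)| * ‖(r : ℚ_[p])‖ * height p q := by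
  have tail_smul : Fin.tail (r • q) = r • Fin.tail q := rfl
  rw [height, height, tail_smul, supNormP_smul, supNormR_smul]
  ring

theorem defect_smul (y : Fin n → ℚ_[p]) (r : ℚ) (q : Fin (n + 1) → ℚ) :
    defect y (r • q) = |(r : ℝ)| * ‖(r : ℚ_[p])‖ * defect y q := by
  rw [defect, defect, norm_affineForm_smul, supNormR_smul]
  ring

theorem one_le_max_defect_height (y : Fin n → ℚ_[p]) {q : Fin (n + 1) → ℚ}
    (hq : q ∈ nonzeroLattice p (n + 1)) : 1 ≤ max (defect y q) (height p q) := by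
  by_cases htail : Fin.tail q = 0
  · have q_succ (i : Fin n) : q i.succ = 0 := congrFun htail i
    have h0 : q 0 ≠ 0 := fun h0 => hq.2 (funext (Fin.cases h0 q_succ))
    have affineForm_eq : affineForm y q = q 0 := by simp [affineForm, q_succ]
    refine le_max_of_le_left (((hq.1 0).one_le_abs_mul_norm h0).trans ?_)
    rw [defect, affineForm_eq, mul_comm]
    exact mul_le_mul_of_nonneg_left (abs_le_supNormR q 0) (norm_nonneg _)
  · have htail_mem : Fin.tail q ∈ nonzeroLattice p n := ⟨fun i => hq.1 i.succ, htail⟩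
    exact le_max_of_le_right ((one_le_supNormP_mul_supNormR htail_mem).trans
      (mul_le_mul_of_nonneg_left (supNormR_tail_le q) (supNormP_nonneg _)))

theorem one_le_height_of_defect_lt_one {y : Fin n → ℚ_[p]} {q : Fin (n + 1) → ℚ}
    (hq : q ∈ nonzeroLattice p (n + 1)) (h : defect y q < 1) : 1 ≤ height p q :=
  (le_max_iff.1 (one_le_max_defect_height y hq)).resolve_left h.not_ge

theorem supNormP_le_max (y : Fin n → ℚ_[p]) (q : Fin (n + 1) → ℚ) :
    supNormP p q ≤ max ‖affineForm y q‖ (max 1 ‖y‖ * supNormP p (Fin.tail q)) := by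
  have tail_nonneg := supNormP_nonneg (p := p) (Fin.tail q)
  refine supNormP_le (le_max_of_le_left (norm_nonneg _)) (Fin.cases ?_ fun i => ?_)
  · have sum_le : ‖∑ i : Fin n, (q i.succ : ℚ_[p]) * y i‖ ≤
        max 1 ‖y‖ * supNormP p (Fin.tail q) := by
      refine IsUltrametricDist.norm_sum_le_of_forall_le_of_nonneg (by positivity) fun i _ => ?_
      rw [norm_mul, mul_comm]
      exact mul_le_mul ((norm_le_pi_norm y i).trans (le_max_right _ _))
        (norm_le_supNormP (Fin.tail q) i) (norm_nonneg _) (by positivity)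
    have q_zero_eq : (q 0 : ℚ_[p]) = affineForm y q + -∑ i : Fin n, (q i.succ : ℚ_[p]) * y i := by
      rw [affineForm, add_neg_cancel_right]
    rw [q_zero_eq]
    refine (IsUltrametricDist.norm_add_le_max _ _).trans (max_le_max_left _ ?_)
    rwa [norm_neg]
  · exact le_max_of_le_right ((norm_le_supNormP (Fin.tail q) i).trans
      (le_mul_of_one_le_left tail_nonneg (le_max_left _ _)))

theorem supNormP_mul_supNormR_le_max (y : Fin n → ℚ_[p]) (q : Fin (n + 1) → ℚ) :
    supNormP p q * supNormR q ≤ max (defect y q) (max 1 ‖y‖ * height p q) := by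
  rw [defect, height, ← mul_assoc, ← max_mul_of_nonneg _ _ (supNormR_nonneg q)]
  exact mul_le_mul_of_nonneg_right (supNormP_le_max y q) (supNormR_nonneg q)

/-- Up to multiplication by powers of `p`, only finitely many vectors of bounded height have defect
less than `1`. -/
theorem exists_pos_le_defect {y : Fin n → ℚ_[p]}
    (hy : ∀ q ∈ nonzeroLattice p (n + 1), affineForm y q ≠ 0) (T : ℝ) :
    ∃ ε > 0, ∀ q ∈ nonzeroLattice p (n + 1), height p q ≤ T → ε ≤ defect y q := by
  have defect_pos {q} (hq : q ∈ nonzeroLattice p (n + 1)) : 0 < defect y q :=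
    mul_pos (norm_pos_iff.2 (hy q hq)) (supNormR_pos hq.2)
  let S : Set (Fin (n + 1) → ℚ) := (fun a i => (a i : ℚ)) ''
    {a : Fin (n + 1) → ℤ | supNormR (fun i => (a i : ℚ)) ≤ max 1 (max 1 ‖y‖ * T)}
  have hS : (S ∩ nonzeroLattice p (n + 1)).Finite :=
    ((finite_setOf_supNormR_intCast_le _).image _).inter_of_left _
  obtain ⟨ε, hε_mem, hε_min⟩ := Set.exists_min_image (insert 1 (defect y '' (S ∩ _))) id
    ((hS.image _).insert 1) (Set.insert_nonempty _ _)
  refine ⟨ε, ?_, fun q hq hqT => ?_⟩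
  · obtain rfl | ⟨q, hq, rfl⟩ := hε_mem
    exacts [one_pos, defect_pos hq.2]
  obtain hdefect | hdefect := le_or_gt 1 (defect y q)
  · exact (hε_min 1 (Set.mem_insert _ _)).trans hdefect
  obtain ⟨k, a, hka, ha⟩ := exists_zpow_smul_eq_intCast hq
  have hp : (p : ℚ) ^ k ≠ 0 := zpow_ne_zero k (Nat.cast_ne_zero.2 (Fact.out : p.Prime).ne_zero)
  have defect_eq : defect y (fun i => (a i : ℚ)) = defect y q := by
    rw [← hka, defect_smul, abs_zpow_mul_norm_zpow, one_mul]
  have height_eq : height p (fun i => (a i : ℚ)) = height p q := by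
    rw [← hka, height_smul, abs_zpow_mul_norm_zpow, one_mul]
  have supNormR_le : supNormR (fun i => (a i : ℚ)) ≤ max 1 (max 1 ‖y‖ * T) := by
    have := supNormP_mul_supNormR_le_max y fun i => (a i : ℚ)
    rw [ha, one_mul, defect_eq, height_eq] at this
    exact this.trans (max_le_max hdefect.le (by gcongr))
  refine hε_min _ (Set.mem_insert_of_mem _ ⟨fun i => (a i : ℚ), ⟨⟨a, supNormR_le, rfl⟩, ?_⟩,
    defect_eq⟩)
  exact hka ▸ smul_mem_nonzeroLattice (isZInvP_zpow k) hp hq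

theorem wpCond_iff {y : Fin n → ℚ_[p]} {v : ℝ} :
    WpCond p y v ↔ ∀ T : ℝ, ∃ q ∈ nonzeroLattice p (n + 1),
      T < height p q ∧ defect y q < height p q ^ (-v) := by
  constructor
  · intro h T
    obtain ⟨q₀, q, hq₀, hq, hT, hlt⟩ := h (max T 0)
    have height_pos : 0 < height p (Fin.cons q₀ q : Fin (n + 1) → ℚ) :=
      (le_max_right _ _).trans_lt hT
    have supNormR_pos : 0 < supNormR (Fin.cons q₀ q : Fin (n + 1) → ℚ) :=
      pos_of_mul_pos_right height_pos (supNormP_nonneg _)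
    refine ⟨Fin.cons q₀ q, ⟨Fin.cases hq₀ hq, ?_⟩, (le_max_left _ _).trans_lt hT, ?_⟩
    · intro h0
      simp [h0, supNormR] at supNormR_pos
    · rw [add_comm] at hlt
      exact (lt_mul_inv_iff₀ supNormR_pos).1 hlt
  · intro h T
    obtain ⟨q, hq, hT, hlt⟩ := h T
    refine ⟨q 0, Fin.tail q, hq.1 0, fun i => hq.1 i.succ, ?_, ?_⟩
    · rwa [Fin.cons_self_tail]
    · rw [Fin.cons_self_tail, add_comm]
      exact (lt_mul_inv_iff₀ (supNormR_pos hq.2)).2 hlt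

theorem wpCond_of_affineForm_eq_zero {y : Fin n → ℚ_[p]} {q : Fin (n + 1) → ℚ}
    (hq : q ∈ nonzeroLattice p (n + 1)) (h0 : affineForm y q = 0) (v : ℝ) : WpCond p y v := by
  rw [wpCond_iff]
  intro T
  have defect_eq : defect y q = 0 := by rw [defect, h0, norm_zero, zero_mul]
  have one_le_height : 1 ≤ height p q :=
    one_le_height_of_defect_lt_one hq (defect_eq.trans_lt one_pos)
  obtain ⟨l, hl, hl_norm⟩ := exists_natCast_gt_norm_eq_one p (max T 0)
  have hl0 : (0 : ℝ) < l := (le_max_right _ _).trans_lt hl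
  have height_eq : height p ((l : ℚ) • q) = l * height p q := by
    rw [height_smul, Rat.cast_natCast, Rat.cast_natCast, hl_norm, mul_one, Nat.abs_cast]
  refine ⟨(l : ℚ) • q, smul_mem_nonzeroLattice (isZInvP_intCast l) ?_ hq, ?_, ?_⟩
  · exact_mod_cast hl0.ne'
  · rw [height_eq]
    exact ((le_max_left _ _).trans_lt hl).trans_le (le_mul_of_one_le_right hl0.le one_le_height)
  · rw [defect_smul, defect_eq, mul_zero, height_eq]
    positivity

/-! ### Dirichlet's theorem -/

theorem exists_ne_zero_abs_le_map_eq_zero {ι A : Type*} [Fintype ι] [AddGroup A] [Fintype A]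
    (f : (ι → ℤ) →+ A) (M : ι → ℕ) (hM : Fintype.card A < ∏ i, (M i + 1)) :
    ∃ e : ι → ℤ, e ≠ 0 ∧ (∀ i, |e i| ≤ M i) ∧ f e = 0 := by
  classical
  obtain ⟨a, b, hab, hf⟩ := Fintype.exists_ne_map_eq_of_card_lt
    (fun a : ∀ i, Fin (M i + 1) => f fun i => (a i : ℤ)) (by simpa using hM)
  refine ⟨(fun i => (a i : ℤ)) - fun i => (b i : ℤ), ?_, fun i => ?_, ?_⟩
  · refine fun h => hab (funext fun i => Fin.ext ?_)
    exact_mod_cast congrFun (sub_eq_zero.1 h) i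
  · have := (a i).isLt
    have := (b i).isLt
    rw [Pi.sub_apply, abs_le]
    omega
  · rw [map_sub, sub_eq_zero]
    exact hf

theorem exists_ne_zero_abs_le_norm_sum_le {ι : Type*} [Fintype ι] [Nonempty ι] (z : ι → ℤ_[p])
    {r : ι → ℝ} (hr : ∀ i, 0 < r i) {s : ℕ} (hs : (p : ℝ) ^ s ≤ ∏ i, r i) :
    ∃ e : ι → ℤ, e ≠ 0 ∧ (∀ i, |(e i : ℝ)| ≤ r i) ∧
      ‖∑ i, (e i : ℤ_[p]) * z i‖ ≤ (p : ℝ) ^ (-s : ℤ) := by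
  have : NeZero (p ^ s) := ⟨pow_ne_zero _ (Fact.out : p.Prime).ne_zero⟩
  let form : (ι → ℤ) →+ ℤ_[p] := AddMonoidHom.mk' (fun e => ∑ i, (e i : ℤ_[p]) * z i)
    fun e e' => by simp only [Pi.add_apply, Int.cast_add, add_mul, Finset.sum_add_distrib]
  have card_lt : Fintype.card (ZMod (p ^ s)) < ∏ i, (⌊r i⌋₊ + 1) := by
    rw [ZMod.card, ← Nat.cast_lt (α := ℝ)]
    push_cast
    exact hs.trans_lt (Finset.prod_lt_prod_of_nonempty (fun i _ => hr i)
      (fun i _ => Nat.lt_floor_add_one (r i)) Finset.univ_nonempty)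
  obtain ⟨e, he0, he_le, he⟩ := exists_ne_zero_abs_le_map_eq_zero
    ((PadicInt.toZModPow s).toAddMonoidHom.comp form) (fun i => ⌊r i⌋₊) card_lt
  refine ⟨e, he0, fun i => ?_, ?_⟩
  · have : |(e i : ℝ)| ≤ ⌊r i⌋₊ := by exact_mod_cast he_le i
    exact this.trans (Nat.floor_le (hr i).le)
  · rw [PadicInt.norm_le_pow_iff_mem_span_pow, ← PadicInt.ker_toZModPow]
    exact he

theorem exists_ne_zero_norm_intCast_add_sum_le (z : Fin n → ℤ_[p]) {r₀ r : ℝ} (hr₀ : 0 < r₀)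
    (hr : 0 < r) {s : ℕ} (hs : (p : ℝ) ^ s ≤ r₀ * r ^ n) :
    ∃ e : Fin (n + 1) → ℤ, e ≠ 0 ∧ |(e 0 : ℝ)| ≤ r₀ ∧ (∀ i : Fin n, |(e i.succ : ℝ)| ≤ r) ∧
      ‖(e 0 : ℤ_[p]) + ∑ i : Fin n, (e i.succ : ℤ_[p]) * z i‖ ≤ (p : ℝ) ^ (-s : ℤ) := by
  obtain ⟨e, he0, he_le, he⟩ := exists_ne_zero_abs_le_norm_sum_le (s := s)
    (Fin.cons 1 z : Fin (n + 1) → ℤ_[p]) (r := Fin.cons r₀ fun _ => r)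
    (Fin.cases hr₀ fun _ => hr) (by simpa [Fin.prod_univ_succ] using hs)
  refine ⟨e, he0, he_le 0, fun i => he_le i.succ, ?_⟩
  simpa only [Fin.sum_univ_succ, Fin.cons_zero, Fin.cons_succ, mul_one] using he

theorem exists_padicInt_eq_pow_mul (y : Fin n → ℚ_[p]) :
    ∃ (K : ℕ) (z : Fin n → ℤ_[p]), ∀ i, (z i : ℚ_[p]) = (p : ℚ_[p]) ^ K * y i := by
  obtain ⟨K, hK⟩ := pow_unbounded_of_one_lt ‖y‖ (one_lt_natCast_prime p)
  have norm_mul_le (i : Fin n) : ‖(p : ℚ_[p]) ^ K * y i‖ ≤ 1 := by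
    rw [norm_mul, Padic.norm_p_pow, zpow_neg, zpow_natCast,
      inv_mul_le_one₀ (pow_pos (one_pos.trans (one_lt_natCast_prime p)) K)]
    exact (norm_le_pi_norm y i).trans hK.le
  exact ⟨K, fun i => ⟨_, norm_mul_le i⟩, fun i => rfl⟩

theorem exists_norm_affineForm_le (y : Fin n → ℚ_[p]) (t : ℕ) :
    ∃ q ∈ nonzeroLattice p (n + 1), supNormR q ≤ (p : ℝ) ^ ((t : ℝ) / (n + 1)) ∧
      supNormP p (Fin.tail q) ≤ 1 ∧ ‖affineForm y q‖ ≤ (p : ℝ) ^ (-t : ℤ) := by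
  have hp : (0 : ℝ) < p := one_pos.trans (one_lt_natCast_prime p)
  have hpQ : (p : ℚ) ≠ 0 := Nat.cast_ne_zero.2 (Fact.out : p.Prime).ne_zero
  have hpP : (p : ℚ_[p]) ≠ 0 := Nat.cast_ne_zero.2 (Fact.out : p.Prime).ne_zero
  obtain ⟨K, z, hz⟩ := exists_padicInt_eq_pow_mul y
  set ρ : ℝ := (p : ℝ) ^ ((t : ℝ) / (n + 1)) with hρ
  have ρ_pos : 0 < ρ := Real.rpow_pos_of_pos hp _
  have ρ_pow : ρ ^ (n + 1) = (p : ℝ) ^ t := by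
    rw [hρ, ← Real.rpow_natCast, ← Real.rpow_mul hp.le, Nat.cast_add_one,
      div_mul_cancel₀ _ (by positivity), Real.rpow_natCast]
  -- A larger box for `e₀`, as `q₀ = p^(-K) e₀` may have the denominators of `q·y`.
  have box_le : (p : ℝ) ^ (K + t) ≤ (p : ℝ) ^ K * ρ * ρ ^ n := by
    rw [mul_assoc, ← pow_succ', ρ_pow, pow_add]
  obtain ⟨e, he0, he0_le, he_le, he⟩ := exists_ne_zero_norm_intCast_add_sum_le z
    (mul_pos (pow_pos hp K) ρ_pos) ρ_pos box_le
  let q : Fin (n + 1) → ℚ := Fin.cons ((p : ℚ) ^ (-K : ℤ) * e 0) fun i => e i.succ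
  refine ⟨q, ⟨?_, ?_⟩, supNormR_le ρ_pos.le ?_, supNormP_le zero_le_one ?_, ?_⟩
  · exact Fin.cases ((isZInvP_zpow _).mul (isZInvP_intCast _)) fun i => isZInvP_intCast _
  · refine fun h => he0 (funext (Fin.cases ?_ fun i => ?_))
    · simpa [q, hpQ] using congrFun h 0
    · simpa [q] using congrFun h i.succ
  · refine Fin.cases ?_ fun i => ?_
    · simpa [q, abs_mul, inv_mul_le_iff₀, hp] using he0_le
    · simpa [q] using he_le i
  · intro i
    simpa [q, Fin.tail] using Padic.norm_int_le_one (p := p) (e i.succ)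
  · have affineForm_eq : (((e 0 : ℤ_[p]) + ∑ i : Fin n, (e i.succ : ℤ_[p]) * z i : ℤ_[p]) :
        ℚ_[p]) = (p : ℚ_[p]) ^ K * affineForm y q := by
      simp [affineForm, q, hz, PadicInt.coe_sum, mul_add, Finset.mul_sum, hpP, mul_left_comm]
    rw [PadicInt.norm_def, affineForm_eq, norm_mul, Padic.norm_p_pow, Nat.cast_add, neg_add,
      zpow_add₀ hp.ne'] at he
    exact le_of_mul_le_mul_left he (zpow_pos hp _)

/-! ### The flow -/

/-- The content of the vector `g_t u_y q`. -/
noncomputable def flowContent (y : Fin n → ℚ_[p]) (t : ℕ) (q : Fin (n + 1) → ℚ) : ℝ :=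
  (p : ℝ) ^ (-(t : ℝ) / ((n : ℝ) + 1)) * max ((p : ℝ) ^ t * defect y q) (height p q)

theorem deltaOne_eq_sInf_image (y : Fin n → ℚ_[p]) (t : ℕ) :
    deltaOne p y t = sInf (flowContent y t '' nonzeroLattice p (n + 1)) := by
  have content_eq (q : Fin (n + 1) → ℚ) :
      ((p : ℝ) ^ (-(t : ℝ) / ((n : ℝ) + 1)) * supNormR q) *
        max ‖((p : ℚ_[p]) ^ t)⁻¹ * affineForm y q‖ (supNormP p (Fin.tail q)) =
          flowContent y t q := by
    rw [flowContent, defect, height, norm_mul, norm_inv, Padic.norm_p_pow, zpow_neg, inv_inv,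
      zpow_natCast, mul_assoc, mul_max_of_nonneg _ _ (supNormR_nonneg q), mul_comm (supNormR q),
      mul_comm (supNormR q), mul_assoc]
  refine congrArg sInf (Set.ext fun c => ?_)
  constructor
  · rintro ⟨q, hq, h0, rfl⟩
    exact ⟨q, ⟨hq, h0⟩, (content_eq q).symm⟩
  · rintro ⟨q, ⟨hq, h0⟩, rfl⟩
    exact ⟨q, hq, h0, (content_eq q).symm⟩

theorem rpow_le_flowContent (y : Fin n → ℚ_[p]) (t : ℕ) {q : Fin (n + 1) → ℚ}
    (hq : q ∈ nonzeroLattice p (n + 1)) :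
    (p : ℝ) ^ (-(t : ℝ) / ((n : ℝ) + 1)) ≤ flowContent y t q := by
  have defect_nonneg : 0 ≤ defect y q := mul_nonneg (norm_nonneg _) (supNormR_nonneg q)
  refine le_mul_of_one_le_right (by positivity) ((one_le_max_defect_height y hq).trans ?_)
  exact max_le_max_right _
    (le_mul_of_one_le_left defect_nonneg (one_le_pow₀ (one_lt_natCast_prime p).le))

theorem rpow_le_deltaOne (y : Fin n → ℚ_[p]) (t : ℕ) :
    (p : ℝ) ^ (-(t : ℝ) / ((n : ℝ) + 1)) ≤ deltaOne p y t := by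
  rw [deltaOne_eq_sInf_image]
  refine le_csInf (nonzeroLattice_nonempty.image _) ?_
  rintro _ ⟨q, hq, rfl⟩
  exact rpow_le_flowContent y t hq

theorem deltaOne_le_flowContent (y : Fin n → ℚ_[p]) (t : ℕ) {q : Fin (n + 1) → ℚ}
    (hq : q ∈ nonzeroLattice p (n + 1)) : deltaOne p y t ≤ flowContent y t q := by
  rw [deltaOne_eq_sInf_image]
  refine csInf_le ⟨(p : ℝ) ^ (-(t : ℝ) / ((n : ℝ) + 1)), ?_⟩ (Set.mem_image_of_mem _ hq)
  rintro _ ⟨q', hq', rfl⟩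
  exact rpow_le_flowContent y t hq'

theorem exists_flowContent_lt_of_deltaOne_lt {y : Fin n → ℚ_[p]} {t : ℕ} {c : ℝ}
    (h : deltaOne p y t < c) : ∃ q ∈ nonzeroLattice p (n + 1), flowContent y t q < c := by
  rw [deltaOne_eq_sInf_image] at h
  obtain ⟨_, ⟨q, hq, rfl⟩, hlt⟩ := exists_lt_of_csInf_lt (nonzeroLattice_nonempty.image _) h
  exact ⟨q, hq, hlt⟩

theorem deltaOne_le_one (y : Fin n → ℚ_[p]) (t : ℕ) : deltaOne p y t ≤ 1 := by
  have hp : (0 : ℝ) < p := one_pos.trans (one_lt_natCast_prime p)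
  obtain ⟨q, hq, supNormR_le, supNormP_le, affineForm_le⟩ := exists_norm_affineForm_le y t
  have max_le_supNormR : max ((p : ℝ) ^ t * defect y q) (height p q) ≤ supNormR q := by
    refine max_le ?_ (mul_le_of_le_one_left (supNormR_nonneg q) supNormP_le)
    rw [defect, ← mul_assoc]
    refine mul_le_of_le_one_left (supNormR_nonneg q) ?_
    rwa [mul_comm, ← le_div_iff₀ (pow_pos hp t), one_div, ← zpow_natCast, ← zpow_neg]
  calc deltaOne p y t ≤ flowContent y t q := deltaOne_le_flowContent y t hq
    _ ≤ (p : ℝ) ^ (-(t : ℝ) / ((n : ℝ) + 1)) * (p : ℝ) ^ ((t : ℝ) / (n + 1)) :=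
      mul_le_mul_of_nonneg_left (max_le_supNormR.trans supNormR_le) (by positivity)
    _ = 1 := by rw [← Real.rpow_add hp, neg_div, neg_add_cancel, Real.rpow_zero]

theorem gammaExp_nonneg (y : Fin n → ℚ_[p]) : 0 ≤ gammaExp p y :=
  Real.sSup_nonneg fun _ h => h.1

theorem le_gammaExp {y : Fin n → ℚ_[p]} {c : ℝ} (hc : 0 ≤ c)
    (h : ∀ N : ℕ, ∃ t : ℕ, N ≤ t ∧ deltaOne p y t ≤ (p : ℝ) ^ (-(c * t))) :
    c ≤ gammaExp p y := by
  refine le_csSup ⟨1 / ((n : ℝ) + 1), ?_⟩ ⟨hc, h⟩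
  rintro c' ⟨-, hc'⟩
  obtain ⟨t, ht, hle⟩ := hc' 1
  have ht0 : (0 : ℝ) < t := Nat.cast_pos.2 ht
  have exponent_le := (Real.rpow_le_rpow_left_iff (one_lt_natCast_prime p)).1
    ((rpow_le_deltaOne y t).trans hle)
  rw [neg_div, neg_le_neg_iff] at exponent_le
  exact le_of_mul_le_mul_right (exponent_le.trans_eq (by ring)) ht0

theorem exists_flowContent_lt_of_lt_gammaExp {y : Fin n → ℚ_[p]} {c : ℝ} (hc : c < gammaExp p y)
    (N : ℕ) :
    ∃ t : ℕ, N ≤ t ∧ ∃ q ∈ nonzeroLattice p (n + 1),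
      flowContent y t q < (p : ℝ) ^ (-(c * t)) := by
  have zero_mem : (0 : ℝ) ∈ {c : ℝ | 0 ≤ c ∧ ∀ N : ℕ, ∃ t : ℕ, N ≤ t ∧
      deltaOne p y t ≤ (p : ℝ) ^ (-(c * (t : ℝ)))} :=
    ⟨le_rfl, fun N => ⟨N, le_rfl, by simpa using deltaOne_le_one y N⟩⟩
  obtain ⟨c', ⟨-, hc'⟩, hcc'⟩ := exists_lt_of_lt_csSup ⟨0, zero_mem⟩ hc
  obtain ⟨t, ht, hle⟩ := hc' (max N 1)
  have ht0 : (0 : ℝ) < t := Nat.cast_pos.2 ((le_max_right N 1).trans ht)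
  refine ⟨t, (le_max_left _ _).trans ht, exists_flowContent_lt_of_deltaOne_lt (hle.trans_lt ?_)⟩
  exact (Real.rpow_lt_rpow_left_iff (one_lt_natCast_prime p)).2
    (neg_lt_neg (mul_lt_mul_of_pos_right hcc' ht0))

/-! ### The dictionary between approximation and the flow -/

theorem max_pow_mul_le_rpow {b X Z v : ℝ} {t : ℕ} (hb : 1 < b) (hv : -1 < v) (hX : 0 < X)
    (hZ : Z ≤ X ^ (-v)) (ht : (v + 1) * Real.logb b X ≤ t)
    (ht' : t ≤ (v + 1) * Real.logb b X + 1) :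
    max (b ^ t * Z) X ≤ b ^ (t / (v + 1) + 1) := by
  have hb0 : 0 < b := one_pos.trans hb
  have hv1 : 0 < v + 1 := by linarith
  set x := Real.logb b X
  have hXx : X = b ^ x := (Real.rpow_logb hb0 hb.ne' hX).symm
  have hxt : x ≤ t / (v + 1) := by rwa [le_div_iff₀ hv1, mul_comm]
  refine max_le ?_ ?_
  · calc b ^ t * Z ≤ b ^ (t : ℝ) * b ^ (x * -v) := by
          rw [Real.rpow_natCast, Real.rpow_mul hb0.le, ← hXx]
          gcongr
      _ = b ^ (t + x * -v) := (Real.rpow_add hb0 _ _).symm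
      _ ≤ b ^ (t / (v + 1) + 1) := Real.rpow_le_rpow_of_exponent_le hb.le (by linarith)
  · rw [hXx]
    exact Real.rpow_le_rpow_of_exponent_le hb.le (by linarith)

theorem lt_rpow_neg_of_pow_mul_lt {b Z v : ℝ} {t : ℕ} (hb : 0 < b) (hv : v + 1 ≠ 0)
    (h : b ^ t * Z < b ^ (t / (v + 1))) : Z < (b ^ (t / (v + 1))) ^ (-v) := by
  refine lt_of_mul_lt_mul_left (h.trans_eq ?_) (pow_nonneg hb.le t)
  rw [← Real.rpow_natCast, ← Real.rpow_mul hb.le, ← Real.rpow_add hb]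
  congr 1
  field_simp
  ring

/-- The rate of decay of `δ(g_t u_y D^{n+1})` which corresponds to approximability of `y` with
exponent `v`. -/
noncomputable def flowRate (n : ℕ) (v : ℝ) : ℝ :=
  1 / ((n : ℝ) + 1) - 1 / (v + 1)

theorem flowRate_eq_div {v : ℝ} (hv : -1 < v) :
    flowRate n v = (v - n) / ((n + 1) * (v + 1)) := by
  have hv1 : v + 1 ≠ 0 := by linarith
  have hn1 : (n : ℝ) + 1 ≠ 0 := by positivity
  rw [flowRate]
  field_simp
  ring

theorem flowRate_le_iff {g v : ℝ} (hg : g < 1 / ((n : ℝ) + 1)) (hv : -1 < v) :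
    flowRate n v ≤ g ↔ v ≤ (n * (1 + g) + g) / (1 - (n + 1) * g) := by
  have hn1 : (0 : ℝ) < n + 1 := by positivity
  have hden : 0 < 1 - ((n : ℝ) + 1) * g := sub_pos.2 ((lt_div_iff₀' hn1).1 hg)
  rw [flowRate_eq_div hv, div_le_iff₀ (mul_pos hn1 (by linarith)), le_div_iff₀ hden]
  constructor <;> intro h <;> linarith

theorem flowRate_lt_iff {g v : ℝ} (hg : g < 1 / ((n : ℝ) + 1)) (hv : -1 < v) :
    flowRate n v < g ↔ v < (n * (1 + g) + g) / (1 - (n + 1) * g) := by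
  have hn1 : (0 : ℝ) < n + 1 := by positivity
  have hden : 0 < 1 - ((n : ℝ) + 1) * g := sub_pos.2 ((lt_div_iff₀' hn1).1 hg)
  rw [flowRate_eq_div hv, div_lt_iff₀ (mul_pos hn1 (by linarith)), lt_div_iff₀ hden]
  constructor <;> intro h <;> linarith

theorem flowRate_lt {v : ℝ} (hv : -1 < v) : flowRate n v < 1 / ((n : ℝ) + 1) :=
  sub_lt_self _ (one_div_pos.2 (by linarith))

theorem flowRate_le_gammaExp {y : Fin n → ℚ_[p]} {v : ℝ} (hv : 0 < v) (h : WpCond p y v) :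
    flowRate n v ≤ gammaExp p y := by
  have hp := one_lt_natCast_prime p
  have hp0 : (0 : ℝ) < p := one_pos.trans hp
  refine le_of_forall_lt_imp_le_of_dense fun c hc => ?_
  obtain hneg | hc0 := lt_or_ge c 0
  · exact hneg.le.trans (gammaExp_nonneg y)
  refine le_gammaExp hc0 fun N => ?_
  have hgap : 0 < flowRate n v - c := sub_pos.2 hc
  obtain ⟨q, hq, hT, hlt⟩ := wpCond_iff.1 h ((p : ℝ) ^ max (N : ℝ) (1 / (flowRate n v - c)))
  have height_pos : 0 < height p q := (Real.rpow_pos_of_pos hp0 _).trans hT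
  set x := Real.logb p (height p q)
  have hx : max (N : ℝ) (1 / (flowRate n v - c)) < x :=
    (Real.lt_logb_iff_rpow_lt hp height_pos).2 hT
  have hx0 : 0 ≤ x := (Nat.cast_nonneg N).trans ((le_max_left _ _).trans hx.le)
  set t := ⌈(v + 1) * x⌉₊
  have hxt : x ≤ t := (le_mul_of_one_le_left hx0 (by linarith)).trans (Nat.le_ceil _)
  refine ⟨t, Nat.cast_le.1 ((le_max_left _ _).trans (hx.le.trans hxt)), ?_⟩
  have one_le_mul : 1 ≤ (flowRate n v - c) * t := by
    rw [← div_le_iff₀' hgap]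
    exact (le_max_right _ _).trans (hx.le.trans hxt)
  calc deltaOne p y t ≤ flowContent y t q := deltaOne_le_flowContent y t hq
    _ ≤ (p : ℝ) ^ (-(t : ℝ) / (n + 1)) * (p : ℝ) ^ (t / (v + 1) + 1) := by
      refine mul_le_mul_of_nonneg_left ?_ (by positivity)
      exact max_pow_mul_le_rpow hp (by linarith) height_pos hlt.le (Nat.le_ceil _)
        (Nat.ceil_lt_add_one (by positivity)).le
    _ = (p : ℝ) ^ (1 - flowRate n v * t) := by
      rw [← Real.rpow_add hp0, flowRate]
      congr 1
      ring
    _ ≤ (p : ℝ) ^ (-(c * t)) := Real.rpow_le_rpow_of_exponent_le hp.le (by linarith)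

theorem max_lt_of_flowContent_lt {y : Fin n → ℚ_[p]} {t : ℕ} {q : Fin (n + 1) → ℚ} {v : ℝ}
    (h : flowContent y t q < (p : ℝ) ^ (-(flowRate n v * t))) :
    max ((p : ℝ) ^ t * defect y q) (height p q) < (p : ℝ) ^ (t / (v + 1)) := by
  have hp0 : (0 : ℝ) < p := one_pos.trans (one_lt_natCast_prime p)
  have exponent_eq : -(flowRate n v * t) = -(t : ℝ) / (n + 1) + t / (v + 1) := by
    rw [flowRate]
    ring
  rw [exponent_eq, Real.rpow_add hp0] at h
  exact lt_of_mul_lt_mul_left h (by positivity)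

theorem wpCond_of_flowRate_lt_gammaExp {y : Fin n → ℚ_[p]} {v : ℝ} (hv : 0 < v)
    (h : flowRate n v < gammaExp p y) : WpCond p y v := by
  have hp := one_lt_natCast_prime p
  have hp0 : (0 : ℝ) < p := one_pos.trans hp
  have hv1 : 0 < v + 1 := by linarith
  by_cases hy : ∃ q ∈ nonzeroLattice p (n + 1), affineForm y q = 0
  · obtain ⟨q, hq, h0⟩ := hy
    exact wpCond_of_affineForm_eq_zero hq h0 v
  push Not at hy
  rw [wpCond_iff]
  intro T
  obtain ⟨ε, hε, le_defect⟩ := exists_pos_le_defect hy T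
  have tendsto_zero : Filter.Tendsto (fun t : ℕ => ((p : ℝ) ^ (t / (v + 1))) ^ (-v))
      Filter.atTop (nhds 0) :=
    (tendsto_rpow_neg_atTop hv).comp <| (tendsto_rpow_atTop_of_base_gt_one _ hp).comp <|
      tendsto_natCast_atTop_atTop.atTop_div_const hv1
  obtain ⟨N, hN⟩ := Filter.eventually_atTop.1
    (tendsto_zero.eventually_le_const (lt_min hε one_pos))
  obtain ⟨t, hNt, q, hq, hlt⟩ := exists_flowContent_lt_of_lt_gammaExp h N
  obtain ⟨hdefect, hheight⟩ := max_lt_iff.1 (max_lt_of_flowContent_lt hlt)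
  have defect_lt : defect y q < ((p : ℝ) ^ (t / (v + 1))) ^ (-v) :=
    lt_rpow_neg_of_pow_mul_lt hp0 hv1.ne' hdefect
  have defect_lt_min : defect y q < min ε 1 := defect_lt.trans_le (hN t hNt)
  have one_le_height : 1 ≤ height p q :=
    one_le_height_of_defect_lt_one hq (defect_lt_min.trans_le (min_le_right _ _))
  refine ⟨q, hq, ?_, defect_lt.trans_le ?_⟩
  · by_contra! hT
    exact (le_defect q hq hT).not_gt (defect_lt_min.trans_le (min_le_left _ _))
  · exact Real.rpow_le_rpow_of_nonpos (by linarith) hheight.le (by linarith)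

theorem iSup_ofReal_eq_ofReal {P : ℝ → Prop} {a : ℝ} (hle : ∀ v, 0 < v → P v → v ≤ a)
    (hlt : ∀ v, 0 < v → v < a → P v) :
    ⨆ (v : ℝ) (_ : 0 < v ∧ P v), ENNReal.ofReal v = ENNReal.ofReal a := by
  refine le_antisymm (iSup₂_le fun v hv => ENNReal.ofReal_le_ofReal (hle v hv.1 hv.2)) ?_
  refine le_of_forall_lt_imp_le_of_dense fun c hc => ?_
  have hc_top : c ≠ ⊤ := (hc.trans ENNReal.ofReal_lt_top).ne
  obtain rfl | hc0 := eq_or_ne c 0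
  · exact zero_le
  have toReal_pos : 0 < c.toReal := ENNReal.toReal_pos hc0 hc_top
  exact le_iSup₂_of_le c.toReal
    ⟨toReal_pos, hlt _ toReal_pos ((ENNReal.lt_ofReal_iff_toReal_lt hc_top).1 hc)⟩
    (ENNReal.ofReal_toReal hc_top).ge

theorem iSup_ofReal_eq_top {P : ℝ → Prop} (hP : ∀ v, 0 < v → P v) :
    ⨆ (v : ℝ) (_ : 0 < v ∧ P v), ENNReal.ofReal v = ⊤ := by
  refine ENNReal.eq_top_of_forall_nnreal_le fun r => ?_
  have hr : (0 : ℝ) < r + 1 := by positivity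
  refine le_iSup₂_of_le ((r : ℝ) + 1) ⟨hr, hP _ hr⟩ ?_
  rw [← ENNReal.ofReal_coe_nnreal]
  exact ENNReal.ofReal_le_ofReal (by linarith)

end

/-- For every `y ∈ ℚ_p^n`,
`w_p(y) = (n(1 + γ(y)) + γ(y)) / (1 − (n+1)γ(y))`, with value `+∞` when
`γ(y) ≥ 1/(n+1)`. -/
theorem statement5 (p : ℕ) [Fact p.Prime] (n : ℕ) (hn : 1 ≤ n) (y : Fin n → ℚ_[p]) :
    wpExp p y =
      if gammaExp p y < 1 / ((n : ℝ) + 1) then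
        ENNReal.ofReal (((n : ℝ) * (1 + gammaExp p y) + gammaExp p y) /
          (1 - ((n : ℝ) + 1) * gammaExp p y))
      else ⊤ := by
  rw [wpExp]
  split_ifs with hγ
  · refine iSup_ofReal_eq_ofReal (fun v hv hW => ?_) fun v hv hlt => ?_
    · exact (flowRate_le_iff hγ (by linarith)).1 (flowRate_le_gammaExp hv hW)
    · exact wpCond_of_flowRate_lt_gammaExp hv ((flowRate_lt_iff hγ (by linarith)).2 hlt)
  · refine iSup_ofReal_eq_top fun v hv => wpCond_of_flowRate_lt_gammaExp hv ?_
    exact (flowRate_lt (by linarith)).trans_le (not_lt.1 hγ)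

end PadicDioph
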